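/- Let (∇_i)_{i∈I} be a finite family of lattice polyhedra in ℝʳ, all with the same tail cone C₀, such that ∇ := ⋃_{i∈I} ∇_i is again a lattice polyhedron with tail cone C₀ and, for every nonempty I' ⊆ I, the intersection ∇_{I'} := ⋂_{i∈I'} ∇_i is either empty or a lattice polyhedron with tail cone C₀. Define F(∅) := ∇ and F(I') := ∇_{I'} for nonempty I'. Then the subcomplex C^F_• of the Koszul complex defined by C^F_p := span_ℂ{e_{I'} : #I' = p and F(I') ≠ ∅} ⊆ ⋀^p ℂ^I is exact (its homology vanishes in every degree), and moreover C^F_• = Σ_{m ∈ ℤʳ} C^F_•(m). -/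

import Mathlib

open Pointwise

noncomputable section

variable {I : Type*} [Fintype I] [LinearOrder I]

/-- The basis vector `e_J` of the Koszul complex `⋀^• ℂ^I`, indexed by the subset
`J = {i_0 < ⋯ < i_{p-1}} ⊆ I`.  The total space of the Koszul complex is modelled as
`Finset I → ℂ`, with `⋀^p ℂ^I` the span of the `e_J` with `J.card = p`. -/
def eVec (J : Finset I) : Finset I → ℂ := fun K => if K = J then 1 else 0

/-- The Koszul differential: `d (e_{I'}) = ∑_j (-1)^j e_{I' \ {i_j}}` for
`I' = {i_0 < ⋯ < i_p}`. -/
def koszulD : (Finset I → ℂ) →ₗ[ℂ] (Finset I → ℂ) where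
  toFun f := fun J => ∑ i ∈ Jᶜ, (-1 : ℂ) ^ (J.filter (· < i)).card * f (insert i J)
  map_add' f g := by
    funext J
    simp [mul_add, Finset.sum_add_distrib]
  map_smul' c f := by
    funext J
    simp only [Pi.smul_apply, smul_eq_mul, RingHom.id_apply, Finset.mul_sum]
    exact Finset.sum_congr rfl fun i _ => by ring

/-- The degree-`p` part of the evaluation subcomplex `C^F_•(m)`:
the span of the `e_{I'}` with `#I' = p` and `m ∈ F(I')`. -/
def evalC {α : Type*} (F : Finset I → Set α) (m : α) (p : ℕ) :
    Submodule ℂ (Finset I → ℂ) :=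
  Submodule.span ℂ {v | ∃ J : Finset I, J.card = p ∧ m ∈ F J ∧ v = eVec J}

/-- The degree-`p` part of the subcomplex `C^F_•` of the Koszul complex:
the span of the `e_{I'}` with `#I' = p` and `F(I') ≠ ∅`. -/
def fullC {α : Type*} (F : Finset I → Set α) (p : ℕ) :
    Submodule ℂ (Finset I → ℂ) :=
  Submodule.span ℂ {v | ∃ J : Finset I, J.card = p ∧ (F J).Nonempty ∧ v = eVec J}

/-- Exactness of the subcomplex `C^F_•`: its homology vanishes in every degree `p ≥ 0`
(in degree `0` this means `C^F_0 = d (C^F_1)`, since the differential vanishes on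
degree `0`). -/
def fullExact {α : Type*} (F : Finset I → Set α) : Prop :=
  ∀ p : ℕ, ∀ x ∈ fullC F p, koszulD x = 0 →
    ∃ y ∈ fullC F (p + 1), koszulD y = x

/-- The contravariant functor associated to a family `(∇_i)_{i ∈ I}` of subsets:
`F(∅) = ⋃_i ∇_i` and `F(I') = ⋂_{i ∈ I'} ∇_i` for nonempty `I' ⊆ I`. -/
def familyFunctor {α : Type*} (nab : I → Set α) (J : Finset I) : Set α :=
  if J = ∅ then ⋃ i, nab i else ⋂ i ∈ J, nab i

/-- The canonical inclusion of the standard lattice `ℤʳ` into `ℝʳ`. -/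
def intVec {r : ℕ} (v : Fin r → ℤ) : Fin r → ℝ := fun i => (v i : ℝ)

/-- The convex cone generated with nonnegative real coefficients by the finite set
`G` of lattice points of `ℤʳ`. -/
def latticeCone {r : ℕ} (G : Finset (Fin r → ℤ)) : Set (Fin r → ℝ) :=
  {x | ∃ c : (Fin r → ℤ) → ℝ, (∀ g, 0 ≤ c g) ∧ x = ∑ g ∈ G, c g • intVec g}

/-- `A ⊆ ℝʳ` is a lattice polyhedron with tail cone `latticeCone G`:
the Minkowski sum of the convex hull of a finite nonempty set of lattice points
and the cone `latticeCone G`. -/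
def IsLatticePolyhedron {r : ℕ} (G : Finset (Fin r → ℤ)) (A : Set (Fin r → ℝ)) : Prop :=
  ∃ S : Finset (Fin r → ℤ), S.Nonempty ∧ A = convexHull ℝ (intVec '' ↑S) + latticeCone G

/-! ### Algebra of the Koszul differential -/

/-- The sign with which `e_{J ∪ {i}}` contributes to `e_J` under the Koszul differential. -/
def koszulSign (J : Finset I) (i : I) : ℂ := (-1) ^ (J.filter (· < i)).card

omit [Fintype I] in
lemma koszulSign_mul_self (J : Finset I) (i : I) : koszulSign J i * koszulSign J i = 1 := by
  rw [koszulSign, ← mul_pow]; simp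

lemma koszulD_apply (f : Finset I → ℂ) (J : Finset I) :
    koszulD f J = ∑ i ∈ Jᶜ, koszulSign J i * f (insert i J) := rfl

omit [Fintype I] in
lemma koszulSign_insert_of_lt {J : Finset I} {a b : I} (ha : a ∉ J) (hab : a < b) :
    koszulSign (insert a J) b = -koszulSign J b := by
  unfold koszulSign
  rw [Finset.filter_insert, if_pos hab, Finset.card_insert_of_notMem (by simp [ha]), pow_succ]
  ring

omit [Fintype I] in
lemma koszulSign_insert_of_le {J : Finset I} {a b : I} (hab : b ≤ a) :
    koszulSign (insert a J) b = koszulSign J b := by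
  unfold koszulSign
  rw [Finset.filter_insert, if_neg (not_lt.mpr hab)]

omit [Fintype I] in
lemma koszulSign_swap {J : Finset I} {a b : I} (ha : a ∉ J) (hb : b ∉ J) (hab : a ≠ b) :
    koszulSign J a * koszulSign (insert a J) b =
      -(koszulSign J b * koszulSign (insert b J) a) := by
  rcases lt_or_gt_of_ne hab with h | h
  · rw [koszulSign_insert_of_lt ha h, koszulSign_insert_of_le h.le]; ring
  · rw [koszulSign_insert_of_lt hb h, koszulSign_insert_of_le h.le]; ring

lemma koszulD_koszulD (f : Finset I → ℂ) : koszulD (koszulD f) = 0 := by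
  funext J
  have key : koszulD (koszulD f) J = ∑ a ∈ Jᶜ, ∑ b ∈ Jᶜ, if a = b then 0 else
      koszulSign J a * koszulSign (insert a J) b * f (insert b (insert a J)) := by
    rw [koszulD_apply]
    refine Finset.sum_congr rfl fun a _ => ?_
    rw [koszulD_apply, Finset.mul_sum, Finset.compl_insert]
    rw [← Finset.sum_subset (Finset.erase_subset a Jᶜ)]
    · refine Finset.sum_congr rfl fun b hb => ?_
      rw [if_neg (Finset.ne_of_mem_erase hb).symm]; ring
    · intro b hb hb'
      rw [if_pos]
      by_contra h
      exact hb' (Finset.mem_erase.mpr ⟨Ne.symm h, hb⟩)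
  have anti : koszulD (koszulD f) J = -koszulD (koszulD f) J := by
    conv_lhs => rw [key, Finset.sum_comm]
    rw [key, ← Finset.sum_neg_distrib]
    refine Finset.sum_congr rfl fun a ha => ?_
    rw [← Finset.sum_neg_distrib]
    refine Finset.sum_congr rfl fun b hb => ?_
    by_cases h : a = b
    · simp [h]
    · rw [if_neg h, if_neg (Ne.symm h), Finset.insert_comm a b,
        koszulSign_swap (Finset.mem_compl.mp ha) (Finset.mem_compl.mp hb) h]
      ring
  simpa [self_eq_neg] using anti

/-- The Koszul complex restricted to chains supported on the set `N` of subsets of `I`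
has no homology. -/
def IsExactOn (N : Set (Finset I)) : Prop :=
  ∀ x : Finset I → ℂ, (∀ J ∉ N, x J = 0) → koszulD x = 0 →
    ∃ y : Finset I → ℂ, (∀ J ∉ N, y J = 0) ∧ koszulD y = x

lemma koszulD_eq_zero_of_notMem {N : Set (Finset I)} (hN : IsLowerSet N) {x : Finset I → ℂ}
    (hx : ∀ J ∉ N, x J = 0) {J : Finset I} (hJ : J ∉ N) : koszulD x J = 0 := by
  rw [koszulD_apply]
  refine Finset.sum_eq_zero fun i _ => ?_
  rw [hx _ fun h => hJ (hN (Finset.subset_insert i J) h), mul_zero]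

lemma isExactOn_empty : IsExactOn (∅ : Set (Finset I)) := fun x hx _ =>
  ⟨0, fun _ _ => rfl, by
    rw [map_zero]
    exact (funext fun J => hx J (Set.notMem_empty J)).symm⟩

/-- Mayer–Vietoris: exactness on two simplicial complexes and on their intersection implies
exactness on their union. -/
lemma IsExactOn.union {M N : Set (Finset I)} (hM : IsLowerSet M) (hN : IsLowerSet N)
    (eM : IsExactOn M) (eN : IsExactOn N) (eMN : IsExactOn (M ∩ N)) : IsExactOn (M ∪ N) := by
  classical
  intro x hx hdx
  let u : Finset I → ℂ := fun J => if J ∈ M then x J else 0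
  have hu : ∀ J ∉ M, u J = 0 := fun J hJ => if_neg hJ
  have hv : ∀ J ∉ N, (x - u) J = 0 := by
    intro J hJ
    by_cases h : J ∈ M
    · simp [u, h]
    · simp [u, h, hx J (by simp [h, hJ])]
  have hdv : koszulD (x - u) = -koszulD u := by rw [map_sub, hdx, zero_sub]
  obtain ⟨w, hw, hdw⟩ := eMN (koszulD u) (fun J hJ => by
    by_cases h : J ∈ M
    · have h2 : koszulD (x - u) J = 0 :=
        koszulD_eq_zero_of_notMem hN hv fun h' => hJ ⟨h, h'⟩
      rw [hdv] at h2
      simpa using h2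
    · exact koszulD_eq_zero_of_notMem hM hu h) (koszulD_koszulD u)
  obtain ⟨y, hy, hdy⟩ := eM (u - w)
    (fun J hJ => by simp [hu J hJ, hw J fun h => hJ h.1]) (by rw [map_sub, hdw, sub_self])
  obtain ⟨z, hz, hdz⟩ := eN (x - u + w)
    (fun J hJ => by rw [Pi.add_apply, hv J hJ, hw J fun h => hJ h.2, add_zero])
    (by rw [map_add, hdw, hdv, neg_add_cancel])
  refine ⟨y + z, fun J hJ => ?_, by rw [map_add, hdy, hdz]; abel⟩
  rw [Pi.add_apply, hy J fun h => hJ (Or.inl h), hz J fun h => hJ (Or.inr h), add_zero]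

/-- A simplicial complex that is a cone with apex `a` is exact. -/
lemma isExactOn_of_insert_mem {N : Set (Finset I)} (a : I)
    (ha : ∀ J ∈ N, insert a J ∈ N) : IsExactOn N := by
  intro x hx hdx
  refine ⟨fun K => if a ∈ K then koszulSign (K.erase a) a * x (K.erase a) else 0,
    fun J hJ => ?_, funext fun J => ?_⟩
  · by_cases h : a ∈ J
    · have : J.erase a ∉ N := fun h' => hJ (by simpa [h] using ha _ h')
      simp [hx _ this]
    · simp [h]
  · rw [koszulD_apply]
    by_cases h : a ∈ J
    · obtain ⟨K, hK, rfl⟩ : ∃ K, a ∉ K ∧ J = insert a K :=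
        ⟨J.erase a, Finset.notMem_erase a J, (Finset.insert_erase h).symm⟩
      have h0 : koszulSign K a * x (insert a K) +
          ∑ i ∈ (insert a K)ᶜ, koszulSign K i * x (insert i K) = 0 := by
        have := congrFun hdx K
        rw [koszulD_apply, ← Finset.add_sum_erase _ _ (Finset.mem_compl.mpr hK)] at this
        rw [Finset.compl_insert]
        exact this
      have h1 : ∀ i ∈ (insert a K)ᶜ, (koszulSign (insert a K) i *
          if a ∈ insert i (insert a K) then
            koszulSign ((insert i (insert a K)).erase a) a * x ((insert i (insert a K)).erase a)
          else 0) = -koszulSign K a * (koszulSign K i * x (insert i K)) := by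
        intro i hi
        simp only [Finset.mem_compl, Finset.mem_insert, not_or] at hi
        have e : (insert i (insert a K)).erase a = insert i K := by
          rw [Finset.insert_comm, Finset.erase_insert]
          simp [Ne.symm hi.1, hK]
        rw [if_pos (by simp), e]
        have s1 := koszulSign_swap hK hi.2 (Ne.symm hi.1)
        have s2 := koszulSign_mul_self K a
        have s3 := koszulSign_mul_self (insert i K) a
        linear_combination (koszulSign K a * koszulSign (insert i K) a * x (insert i K)) * s1
          - (koszulSign (insert a K) i * koszulSign (insert i K) a * x (insert i K)) * s2
          - (koszulSign K a * koszulSign K i * x (insert i K)) * s3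
      rw [Finset.sum_congr rfl h1, ← Finset.mul_sum]
      linear_combination (-koszulSign K a) * h0 + x (insert a K) * koszulSign_mul_self K a
    · rw [Finset.sum_eq_single a]
      · rw [if_pos (Finset.mem_insert_self a J), Finset.erase_insert h, ← mul_assoc,
          koszulSign_mul_self, one_mul]
      · intro i _ hia
        rw [if_neg (by simp [Ne.symm hia, h]), mul_zero]
      · intro h'
        exact absurd (Finset.mem_compl.mpr h) h'

lemma mem_span_eVec_iff (P : Finset I → Prop) (x : Finset I → ℂ) :
    x ∈ Submodule.span ℂ {v | ∃ J, P J ∧ v = eVec J} ↔ ∀ J, ¬P J → x J = 0 := by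
  classical
  constructor
  · intro hx J hJ
    induction hx using Submodule.span_induction with
    | mem v hv =>
      obtain ⟨K, hK, rfl⟩ := hv
      exact if_neg fun h => hJ (by rwa [h])
    | zero => rfl
    | add v w _ _ hv hw => rw [Pi.add_apply, hv, hw, add_zero]
    | smul c v _ hv => rw [Pi.smul_apply, hv, smul_zero]
  · intro hx
    have : x = ∑ J, x J • eVec J := by
      funext K
      simp [eVec]
    rw [this]
    refine Submodule.sum_mem _ fun J _ => ?_
    by_cases h : P J
    · exact Submodule.smul_mem _ _ (Submodule.subset_span ⟨J, h, rfl⟩)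
    · rw [hx J h, zero_smul]
      exact Submodule.zero_mem _

lemma mem_fullC_iff {α : Type*} (F : Finset I → Set α) (p : ℕ) (x : Finset I → ℂ) :
    x ∈ fullC F p ↔ ∀ J, ¬(J.card = p ∧ (F J).Nonempty) → x J = 0 := by
  rw [← mem_span_eVec_iff]
  simp only [fullC, and_assoc]

/-- Exactness of the total complex implies exactness in every degree. -/
lemma fullExact_of_isExactOn {α : Type*} {F : Finset I → Set α}
    (h : IsExactOn {J | (F J).Nonempty}) : fullExact F := by
  intro p x hx hdx
  rw [mem_fullC_iff] at hx
  obtain ⟨y, hy, hdy⟩ := h x (fun J hJ => hx J fun h' => hJ h'.2) hdx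
  refine ⟨fun J => if J.card = p + 1 then y J else 0, ?_, funext fun J => ?_⟩
  · rw [mem_fullC_iff]
    intro J hJ
    by_cases hc : J.card = p + 1
    · rw [if_pos hc]
      exact hy J fun h' => hJ ⟨hc, h'⟩
    · exact if_neg hc
  · have hcard : ∀ i ∈ Jᶜ, (insert i J).card = J.card + 1 := fun i hi =>
      Finset.card_insert_of_notMem (Finset.mem_compl.mp hi)
    rw [koszulD_apply]
    by_cases hc : J.card = p
    · rw [← hdy, koszulD_apply]
      refine Finset.sum_congr rfl fun i hi => ?_
      rw [if_pos (by rw [hcard i hi, hc])]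
    · rw [hx J fun h' => hc h'.1]
      refine Finset.sum_eq_zero fun i hi => ?_
      rw [if_neg (by rw [hcard i hi]; omega), mul_zero]

/-! ### Nerves of closed convex covers -/

/-- The subsets `J` of the index set for which `F J` meets `C`. -/
def nerveIn {α : Type*} (F : Finset I → Set α) (C : Set α) : Set (Finset I) :=
  {J | (F J ∩ C).Nonempty}

omit [Fintype I] [LinearOrder I] in
lemma nerveIn_mono {α : Type*} (F : Finset I → Set α) {C D : Set α} (h : C ⊆ D) :
    nerveIn F C ⊆ nerveIn F D :=
  fun _ hJ => hJ.mono (Set.inter_subset_inter_right _ h)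

omit [Fintype I] [LinearOrder I] in
lemma isLowerSet_nerveIn {α : Type*} {F : Finset I → Set α} (hF : Antitone F) (C : Set α) :
    IsLowerSet (nerveIn F C) :=
  fun _ _ h hJ => hJ.mono (Set.inter_subset_inter_left _ (hF h))

omit [Fintype I] [LinearOrder I] in
lemma nerveIn_union {α : Type*} (F : Finset I → Set α) (C D : Set α) :
    nerveIn F (C ∪ D) = nerveIn F C ∪ nerveIn F D := by
  ext J
  simp [nerveIn, Set.inter_union_distrib_left, Set.union_nonempty]

omit [Fintype I] in
lemma antitone_familyFunctor {α : Type*} (nab : I → Set α) : Antitone (familyFunctor nab) := by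
  intro J K hJK x hx
  unfold familyFunctor at hx ⊢
  by_cases hK : K = ∅
  · have hJ : J = ∅ := Finset.subset_empty.mp (hK ▸ hJK)
    rw [if_pos hK] at hx
    rwa [if_pos hJ]
  rw [if_neg hK] at hx
  split_ifs with hJ
  · obtain ⟨i, hi⟩ := Finset.nonempty_iff_ne_empty.mpr hK
    exact Set.mem_iUnion.mpr ⟨i, Set.mem_iInter₂.mp hx i hi⟩
  · exact Set.mem_iInter₂.mpr fun i hi => Set.mem_iInter₂.mp hx i (hJK hi)

lemma isClosed_familyFunctor {α : Type*} [TopologicalSpace α] {nab : I → Set α}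
    (h : ∀ i, IsClosed (nab i)) (J : Finset I) : IsClosed (familyFunctor nab J) := by
  unfold familyFunctor
  split_ifs
  · exact isClosed_iUnion_of_finite h
  · exact isClosed_biInter fun i _ => h i

/-- The nerve of a cover, localised at a point, is a full simplex or void. -/
lemma isExactOn_nerveIn_of_subsingleton {α : Type*} (nab : I → Set α) {C : Set α}
    (hC : C.Subsingleton) : IsExactOn (nerveIn (familyFunctor nab) C) := by
  rcases (nerveIn (familyFunctor nab) C).eq_empty_or_nonempty with h | ⟨J, x, hx, hxC⟩
  · rw [h]
    exact isExactOn_empty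
  · have h0 : x ∈ ⋃ i, nab i := by
      simpa [familyFunctor] using antitone_familyFunctor nab (Finset.empty_subset J) hx
    obtain ⟨a, ha⟩ := Set.mem_iUnion.mp h0
    refine isExactOn_of_insert_mem a ?_
    rintro K ⟨y, hy, hyC⟩
    obtain rfl := hC hxC hyC
    refine ⟨x, ?_, hxC⟩
    unfold familyFunctor at hy ⊢
    rw [if_neg (Finset.insert_ne_empty a K)]
    refine Set.mem_iInter₂.mpr fun i hi => ?_
    rcases Finset.mem_insert.mp hi with rfl | hi
    · exact ha
    · rw [if_neg (Finset.ne_empty_of_mem hi)] at hy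
      exact Set.mem_iInter₂.mp hy i hi

omit [LinearOrder I] in
/-- The nerve of a chain of compact sets stabilises. -/
lemma exists_nerveIn_sInter_eq {E : Type*} [TopologicalSpace E] [T2Space E]
    {F : Finset I → Set E} (hF : ∀ J, IsClosed (F J))
    {c : Set (Set E)} (hcomp : ∀ C ∈ c, IsCompact C) (hchain : IsChain (· ⊆ ·) c)
    (hne : c.Nonempty) : ∃ C ∈ c, nerveIn F (⋂₀ c) = nerveIn F C := by
  obtain ⟨C, hC, hmin⟩ : ∃ C ∈ c, ∀ D ∈ c, (nerveIn F C).ncard ≤ (nerveIn F D).ncard := by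
    obtain ⟨C, hC⟩ := exists_minimalFor_of_wellFoundedLT (· ∈ c)
      (fun C => (nerveIn F C).ncard) hne
    exact ⟨C, hC.1, fun D hD => (le_total _ _).elim id (hC.2 hD)⟩
  have hsub : ∀ D ∈ c, nerveIn F C ⊆ nerveIn F D := by
    intro D hD
    rcases hchain.total hC hD with h | h
    · exact nerveIn_mono F h
    · exact (Set.eq_of_subset_of_ncard_le (nerveIn_mono F h) (hmin D hD)).ge
  refine ⟨C, hC, (nerveIn_mono F (Set.sInter_subset_of_mem hC)).antisymm fun J hJ => ?_⟩
  have hdir : DirectedOn (· ⊇ ·) ((fun D => F J ∩ D) '' c) := by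
    rintro _ ⟨D, hD, rfl⟩ _ ⟨D', hD', rfl⟩
    rcases hchain.total hD hD' with h | h
    · exact ⟨_, ⟨D, hD, rfl⟩, subset_rfl, Set.inter_subset_inter_right _ h⟩
    · exact ⟨_, ⟨D', hD', rfl⟩, Set.inter_subset_inter_right _ h, subset_rfl⟩
  have hcpt : ∀ D ∈ (fun D => F J ∩ D) '' c, IsCompact D := by
    rintro _ ⟨D, hD, rfl⟩
    exact (hcomp D hD).inter_left (hF J)
  obtain ⟨x, hx⟩ := IsCompact.nonempty_sInter_of_directed_nonempty_isCompact_isClosed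
    (S := (fun D => F J ∩ D) '' c) (hS := (hne.image _).to_subtype) hdir
    (by rintro _ ⟨D, hD, rfl⟩; exact hsub D hD hJ) hcpt (fun D hD => (hcpt D hD).isClosed)
  have hx' : ∀ D ∈ c, x ∈ F J ∩ D := fun D hD => hx _ ⟨D, hD, rfl⟩
  exact ⟨x, (hx' C hC).1, fun D hD => (hx' D hD).2⟩

section Convex

variable {E : Type*} [AddCommGroup E] [Module ℝ E] [TopologicalSpace E]

/-- Exactness of a nerve can be checked after cutting along a hyperplane. -/
lemma isExactOn_nerveIn_of_cut {F : Finset I → Set E} (hF : Antitone F)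
    (hconv : ∀ J, Convex ℝ (F J)) {C : Set E} (hC : Convex ℝ C) (f : E →L[ℝ] ℝ) (t : ℝ)
    (h₁ : IsExactOn (nerveIn F (C ∩ {x | f x ≤ t})))
    (h₂ : IsExactOn (nerveIn F (C ∩ {x | t ≤ f x})))
    (h₃ : IsExactOn (nerveIn F (C ∩ {x | f x = t}))) : IsExactOn (nerveIn F C) := by
  have hunion : C = C ∩ {x | f x ≤ t} ∪ C ∩ {x | t ≤ f x} := by
    rw [← Set.inter_union_distrib_left]
    ext x
    simp [le_total]
  have hinter : nerveIn F (C ∩ {x | f x = t}) =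
      nerveIn F (C ∩ {x | f x ≤ t}) ∩ nerveIn F (C ∩ {x | t ≤ f x}) := by
    ext J
    constructor
    · rintro ⟨x, hx, hxC, hxt⟩
      exact ⟨⟨x, hx, hxC, le_of_eq hxt⟩, ⟨x, hx, hxC, ge_of_eq hxt⟩⟩
    · rintro ⟨⟨x, hx, hxC, hxt⟩, ⟨y, hy, hyC, hyt⟩⟩
      have hcv : Convex ℝ (f '' (F J ∩ C)) := ((hconv J).inter hC).is_linear_image f.isLinear
      obtain ⟨z, ⟨hz, hzC⟩, hzt⟩ := hcv.ordConnected.out ⟨x, ⟨hx, hxC⟩, rfl⟩ ⟨y, ⟨hy, hyC⟩, rfl⟩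
        ⟨hxt, hyt⟩
      exact ⟨z, hz, hzC, hzt⟩
  rw [hinter] at h₃
  rw [hunion, nerveIn_union]
  exact h₁.union (isLowerSet_nerveIn hF _) (isLowerSet_nerveIn hF _) h₂ h₃

variable [IsTopologicalAddGroup E] [ContinuousSMul ℝ E] [LocallyConvexSpace ℝ E] [T2Space E]

lemma isExactOn_nerveIn_of_isCompact (nab : I → Set E) (hcl : ∀ i, IsClosed (nab i))
    (hconv : ∀ J, Convex ℝ (familyFunctor nab J)) {C : Set E} (hC : IsCompact C)
    (hCc : Convex ℝ C) : IsExactOn (nerveIn (familyFunctor nab) C) := by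
  by_contra hbad
  obtain ⟨M, -, ⟨hM, hMc, hMbad⟩, hmin⟩ := zorn_superset_nonempty
    {C : Set E | IsCompact C ∧ Convex ℝ C ∧ ¬IsExactOn (nerveIn (familyFunctor nab) C)}
    (fun c hc hchain hne => by
      obtain ⟨D, hD, heq⟩ := exists_nerveIn_sInter_eq (isClosed_familyFunctor hcl)
        (fun C h => (hc h).1) hchain hne
      refine ⟨⋂₀ c, ⟨?_, convex_sInter fun C h => (hc h).2.1, ?_⟩,
        fun C h => Set.sInter_subset_of_mem h⟩
      · exact (hc hD).1.of_isClosed_subset (isClosed_sInter fun C h => (hc h).1.isClosed)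
          (Set.sInter_subset_of_mem hD)
      · rw [heq]
        exact (hc hD).2.2)
    C ⟨hC, hCc, hbad⟩
  have hns : ¬M.Subsingleton := fun h => hMbad (isExactOn_nerveIn_of_subsingleton nab h)
  obtain ⟨x, hx, y, hy, hxy⟩ := Set.not_subsingleton_iff.mp hns
  obtain ⟨f, hf⟩ := geometric_hahn_banach_point_point hxy
  have hsmall : ∀ H : Set E, IsClosed H → Convex ℝ H → (x ∉ H ∨ y ∉ H) →
      IsExactOn (nerveIn (familyFunctor nab) (M ∩ H)) := by
    intro H hH hHc hxyH
    by_contra hb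
    have := hmin ⟨hM.inter_right hH, hMc.inter hHc, hb⟩ Set.inter_subset_left
    exact hxyH.elim (fun h => h (this hx).2) fun h => h (this hy).2
  refine hMbad (isExactOn_nerveIn_of_cut (antitone_familyFunctor nab) hconv hMc f
    ((f x + f y) / 2) (hsmall _ ?_ ?_ ?_) (hsmall _ ?_ ?_ ?_) (hsmall _ ?_ ?_ ?_))
  · exact isClosed_le f.continuous continuous_const
  · exact convex_halfSpace_le f.isLinear _
  · right
    simp only [Set.mem_ofPred_eq]
    linarith
  · exact isClosed_le continuous_const f.continuous
  · exact convex_halfSpace_ge f.isLinear _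
  · left
    simp only [Set.mem_ofPred_eq]
    linarith
  · exact isClosed_eq f.continuous continuous_const
  · exact convex_hyperplane f.isLinear _
  · left
    simp only [Set.mem_ofPred_eq]
    intro h
    linarith

/-- The nerve of a finite closed convex cover of a convex set is acyclic. -/
lemma isExactOn_familyFunctor (nab : I → Set E) (hcl : ∀ i, IsClosed (nab i))
    (hconv : ∀ J, Convex ℝ (familyFunctor nab J)) :
    IsExactOn {J | (familyFunctor nab J).Nonempty} := by
  classical
  let pt : Finset I → E := fun J => if h : (familyFunctor nab J).Nonempty then h.some else 0
  have hpt : ∀ J, (familyFunctor nab J).Nonempty → pt J ∈ familyFunctor nab J := by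
    intro J h
    simp only [pt, dif_pos h]
    exact h.some_mem
  have heq : {J | (familyFunctor nab J).Nonempty} =
      nerveIn (familyFunctor nab) (convexHull ℝ (Set.range pt)) := by
    ext J
    exact ⟨fun h => ⟨pt J, hpt J h, subset_convexHull ℝ _ ⟨J, rfl⟩⟩,
      fun h => h.mono Set.inter_subset_left⟩
  rw [heq]
  exact isExactOn_nerveIn_of_isCompact nab hcl hconv
    ((Set.finite_range pt).isCompact_convexHull ℝ) (convex_convexHull ℝ _)

end Convex

/-! ### Lattice polyhedra -/

lemma convex_latticeCone {r : ℕ} (G : Finset (Fin r → ℤ)) : Convex ℝ (latticeCone G) := by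
  rintro _ ⟨c, hc, rfl⟩ _ ⟨d, hd, rfl⟩ a b ha hb -
  refine ⟨fun g => a * c g + b * d g,
    fun g => add_nonneg (mul_nonneg ha (hc g)) (mul_nonneg hb (hd g)), ?_⟩
  simp only [add_smul, mul_smul, Finset.sum_add_distrib, Finset.smul_sum]

lemma latticeCone_mono {r : ℕ} {G H : Finset (Fin r → ℤ)} (h : G ⊆ H) :
    latticeCone G ⊆ latticeCone H := by
  classical
  rintro _ ⟨c, hc, rfl⟩
  refine ⟨fun g => if g ∈ G then c g else 0, fun g => ?_, ?_⟩
  · dsimp only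
    split_ifs
    exacts [hc g, le_rfl]
  · rw [← Finset.sum_subset h fun g _ hg => by simp only [if_neg hg, zero_smul]]
    exact Finset.sum_congr rfl fun g hg => by simp only [if_pos hg]

/-- If the generators satisfy a linear relation with a positive coefficient, every point of the
cone can be written without one of them. -/
lemma exists_mem_latticeCone_erase {r : ℕ} {G : Finset (Fin r → ℤ)} {a : (Fin r → ℤ) → ℝ}
    (ha : ∑ g ∈ G, a g • intVec g = 0) (hpos : ∃ g ∈ G, 0 < a g) {x : Fin r → ℝ}
    (hx : x ∈ latticeCone G) : ∃ g ∈ G, x ∈ latticeCone (G.erase g) := by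
  obtain ⟨c, hc, rfl⟩ := hx
  obtain ⟨k, hk, hmin⟩ := (G.filter (0 < a ·)).exists_min_image (fun g => c g / a g)
    (by obtain ⟨g, hg, hg'⟩ := hpos; exact ⟨g, Finset.mem_filter.mpr ⟨hg, hg'⟩⟩)
  obtain ⟨hkG, hka⟩ := Finset.mem_filter.mp hk
  set t := c k / a k with ht
  have ht0 : 0 ≤ t := div_nonneg (hc k) hka.le
  have hnn : ∀ g ∈ G, 0 ≤ c g - t * a g := by
    intro g hg
    rcases lt_or_ge 0 (a g) with h | h
    · have := hmin g (Finset.mem_filter.mpr ⟨hg, h⟩)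
      rw [le_div_iff₀ h] at this
      linarith
    · have := mul_nonpos_of_nonneg_of_nonpos ht0 h
      linarith [hc g]
  refine ⟨k, hkG, fun g => max 0 (c g - t * a g), fun g => le_max_left _ _, ?_⟩
  have hk0 : c k - t * a k = 0 := by rw [ht, div_mul_cancel₀ _ hka.ne', sub_self]
  have h1 : ∑ g ∈ G, c g • intVec g = ∑ g ∈ G, (c g - t * a g) • intVec g := by
    simp only [sub_smul, mul_smul, Finset.sum_sub_distrib, ← Finset.smul_sum, ha, smul_zero,
      sub_zero]
  rw [h1, ← Finset.add_sum_erase _ _ hkG, hk0, zero_smul, zero_add]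
  exact Finset.sum_congr rfl fun g hg => by
    simp only [max_eq_right (hnn g (Finset.mem_of_mem_erase hg))]

lemma isClosed_latticeCone_of_linearIndependent {r : ℕ} {G : Finset (Fin r → ℤ)}
    (h : LinearIndependent ℝ fun g : G => intVec (g : Fin r → ℤ)) :
    IsClosed (latticeCone G) := by
  classical
  have himage : latticeCone G =
      Fintype.linearCombination ℝ (fun g : G => intVec (g : Fin r → ℤ)) '' Set.Ici 0 := by
    ext x
    constructor
    · rintro ⟨c, hc, rfl⟩
      refine ⟨fun g => c g, fun g => hc g, ?_⟩
      rw [Fintype.linearCombination_apply]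
      exact Finset.sum_coe_sort G fun g => c g • intVec g
    · rintro ⟨c, hc, rfl⟩
      refine ⟨fun g => if hg : g ∈ G then c ⟨g, hg⟩ else 0, fun g => ?_, ?_⟩
      · dsimp only
        split_ifs with hg
        exacts [hc ⟨g, hg⟩, le_rfl]
      · rw [Fintype.linearCombination_apply, ← Finset.sum_coe_sort G]
        exact Finset.sum_congr rfl fun g _ => by simp only [dif_pos g.2]
  rw [himage]
  exact (LinearMap.isClosedEmbedding_of_injective
    (LinearMap.ker_eq_bot.mpr h.fintypeLinearCombination_injective)).isClosedMap _ isClosed_Ici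

lemma isClosed_latticeCone {r : ℕ} (G : Finset (Fin r → ℤ)) : IsClosed (latticeCone G) := by
  classical
  induction G using Finset.strongInduction with
  | H G ih =>
    by_cases h : LinearIndependent ℝ fun g : G => intVec (g : Fin r → ℤ)
    · exact isClosed_latticeCone_of_linearIndependent h
    · obtain ⟨a, ha, k, hk⟩ := Fintype.not_linearIndependent_iff.mp h
      obtain ⟨b, hb, hpos⟩ : ∃ b : (Fin r → ℤ) → ℝ, ∑ g ∈ G, b g • intVec g = 0 ∧
          ∃ g ∈ G, 0 < b g := by
        rcases lt_or_gt_of_ne hk with hneg | hpos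
        · refine ⟨fun g => if hg : g ∈ G then -a ⟨g, hg⟩ else 0, ?_, k, k.2, by simpa using hneg⟩
          rw [← Finset.sum_coe_sort G, ← neg_eq_zero, ← ha, ← Finset.sum_neg_distrib]
          exact Finset.sum_congr rfl fun g _ => by simp
        · refine ⟨fun g => if hg : g ∈ G then a ⟨g, hg⟩ else 0, ?_, k, k.2, by simpa using hpos⟩
          rw [← Finset.sum_coe_sort G, ← ha]
          exact Finset.sum_congr rfl fun g _ => by simp
      have heq : latticeCone G = ⋃ g ∈ G, latticeCone (G.erase g) := by
        refine subset_antisymm (fun x hx => ?_)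
          (Set.iUnion₂_subset fun g _ => latticeCone_mono (G.erase_subset g))
        obtain ⟨g, hg, hxg⟩ := exists_mem_latticeCone_erase hb hpos hx
        exact Set.mem_biUnion hg hxg
      rw [heq]
      exact G.finite_toSet.isClosed_biUnion fun g hg => ih _ (Finset.erase_ssubset hg)

lemma IsLatticePolyhedron.convex {r : ℕ} {G : Finset (Fin r → ℤ)} {A : Set (Fin r → ℝ)}
    (h : IsLatticePolyhedron G A) : Convex ℝ A := by
  obtain ⟨S, -, rfl⟩ := h
  exact (convex_convexHull ℝ _).add (convex_latticeCone G)

lemma IsLatticePolyhedron.isClosed {r : ℕ} {G : Finset (Fin r → ℤ)} {A : Set (Fin r → ℝ)}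
    (h : IsLatticePolyhedron G A) : IsClosed A := by
  obtain ⟨S, -, rfl⟩ := h
  exact (isClosed_latticeCone G).add_left_of_isCompact
    ((S.finite_toSet.image intVec).isCompact_convexHull ℝ)

lemma IsLatticePolyhedron.exists_intVec_mem {r : ℕ} {G : Finset (Fin r → ℤ)}
    {A : Set (Fin r → ℝ)} (h : IsLatticePolyhedron G A) : ∃ m, intVec m ∈ A := by
  obtain ⟨S, ⟨m, hm⟩, rfl⟩ := h
  refine ⟨m, intVec m, subset_convexHull ℝ _ ⟨m, hm, rfl⟩, 0, ?_, add_zero _⟩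
  exact ⟨0, fun _ => le_rfl, by simp⟩

/-- Lemma 4 (iii) of the paper.
Let `(∇_i)_{i∈I}` be a finite family of lattice polyhedra in `ℝʳ`, all with the same tail
cone `C₀ = latticeCone G₀`, such that `∇ = ⋃_i ∇_i` is again a lattice polyhedron with tail
cone `C₀`, and every nonempty intersection `∇_{I'} = ⋂_{i ∈ I'} ∇_i` (`∅ ≠ I' ⊆ I`) is a
lattice polyhedron with tail cone `C₀`.  With `F(∅) := ∇` and `F(I') := ∇_{I'}`, the
subcomplex `C^F_•` of the Koszul complex is exact, and `C^F_• = Σ_{m ∈ ℤʳ} C^F_•(m)`. -/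
theorem full_subcomplex_exact {r : ℕ} (G₀ : Finset (Fin r → ℤ))
    (nab : I → Set (Fin r → ℝ))
    (hnab : ∀ i, IsLatticePolyhedron G₀ (nab i))
    (hunion : IsLatticePolyhedron G₀ (⋃ i, nab i))
    (hinter : ∀ J : Finset I, J.Nonempty →
      (⋂ i ∈ J, nab i) = ∅ ∨ IsLatticePolyhedron G₀ (⋂ i ∈ J, nab i)) :
    fullExact (familyFunctor nab) ∧
    (∀ p : ℕ, fullC (familyFunctor nab) p =
      ⨆ m : Fin r → ℤ, evalC (familyFunctor nab) (intVec m) p) := by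
  have hAne : ∀ J, (familyFunctor nab J).Nonempty → IsLatticePolyhedron G₀ (familyFunctor nab J) := by
    intro J hJ
    unfold familyFunctor at hJ ⊢
    split_ifs at hJ ⊢ with h
    · exact hunion
    · exact (hinter J (Finset.nonempty_iff_ne_empty.mpr h)).resolve_left hJ.ne_empty
  refine ⟨fullExact_of_isExactOn ?_, fun p => ?_⟩
  · refine isExactOn_familyFunctor nab (fun i => (hnab i).isClosed) (fun J => ?_)
    rcases (familyFunctor nab J).eq_empty_or_nonempty with h | h
    · rw [h]; exact convex_empty
    · exact (hAne J h).convex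
  · apply le_antisymm
    · refine Submodule.span_le.mpr ?_
      rintro _ ⟨J, hJ, hne, rfl⟩
      obtain ⟨m, hm⟩ := (hAne J hne).exists_intVec_mem
      exact Submodule.mem_iSup_of_mem m (Submodule.subset_span ⟨J, hJ, hm, rfl⟩)
    · refine iSup_le fun m => Submodule.span_mono ?_
      rintro _ ⟨J, hJ, hm, rfl⟩
      exact ⟨J, hJ, ⟨_, hm⟩, rfl⟩

end
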